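/- Fix a real number q with 0 < q < 1 and a complex number t with |t| < 1. Then the Macdonald constant term formula of type A₁ holds: (1/2π) ∫₀^{2π} μ(e^{iφ}; q, t) dφ = ∏_{j=1}^∞ (1 − t qʲ)² / ((1 − t² qʲ)(1 − qʲ)). (Formula (4.21) of the paper.) -/

import Mathlib

open scoped BigOperators
open Filter

noncomputable section

/-- Symmetric monomial `M_r(X) = X^r + X^{-r}` for `r ≥ 1`, `M_0 = 1`. -/
def Msym (r : ℕ) (X : ℂ) : ℂ := if r = 0 then 1 else X ^ r + X⁻¹ ^ r

/-- Continuous q-Hermite Laurent polynomial (Macdonald polynomial of type A₁ at t = 0). -/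
def PbarA1 (q : ℝ) (n : ℕ) (X : ℂ) : ℂ :=
  Msym n X + ∑ j ∈ Finset.Icc 1 (n / 2),
    (∏ i ∈ Finset.range j, (1 - (q : ℂ) ^ (n - i)) / (1 - (q : ℂ) ^ (i + 1))) *
      Msym (n - 2 * j) X

/-- Global q-Whittaker function of type A₁. -/
def whitA1 (q : ℝ) (X Λ : ℂ) : ℂ :=
  ∑' n : ℕ, ((q ^ ((n : ℝ) ^ 2 / 4) : ℝ) : ℂ) * X ^ n * PbarA1 q n Λ /
    ∏ j ∈ Finset.Icc 1 n, (1 - (q : ℂ) ^ j)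

/-- Theta function `θ(Λ) = ∑_{j ∈ ℤ} q^{j²/4} Λ^j`. -/
def thetaA1 (q : ℝ) (Λ : ℂ) : ℂ :=
  ∑' j : ℤ, ((q ^ ((j : ℝ) ^ 2 / 4) : ℝ) : ℂ) * Λ ^ j

/-- Rogers Laurent polynomial (symmetric Macdonald polynomial of type A₁). -/
def RogersA1 (q : ℝ) (t : ℂ) (n : ℕ) (X : ℂ) : ℂ :=
  Msym n X + ∑ j ∈ Finset.Icc 1 (n / 2),
    (∏ i ∈ Finset.range j,
      ((1 - (q : ℂ) ^ (n - i)) * (1 - t * (q : ℂ) ^ i)) /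
      ((1 - (q : ℂ) ^ (1 + i)) * (1 - t * (q : ℂ) ^ (n - i - 1)))) *
    Msym (n - 2 * j) X

/-- Global q,t-spherical function of type A₁, with `t = s²`. -/
def sphA1 (q s : ℝ) (X Λ : ℂ) : ℂ :=
  ∑' n : ℕ, (s : ℂ) ^ n * ((q ^ ((n : ℝ) ^ 2 / 4) : ℝ) : ℂ) *
    RogersA1 q ((s : ℂ) ^ 2) n X * RogersA1 q ((s : ℂ) ^ 2) n Λ *
    ∏ i ∈ Finset.range n,
      ((1 - (s : ℂ) ^ 2 * (q : ℂ) ^ i) * (1 - (s : ℂ) ^ 2 * (q : ℂ) ^ (i + 1))) /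
      ((1 - ((s : ℂ) ^ 2) ^ 2 * (q : ℂ) ^ i) * (1 - (q : ℂ) ^ (i + 1)))

/-- Macdonald truncated theta weight function of type A₁. -/
def muA1 (q : ℝ) (t : ℂ) (X : ℂ) : ℂ :=
  ∏' j : ℕ, ((1 - X ^ 2 * (q : ℂ) ^ j) * (1 - X⁻¹ ^ 2 * (q : ℂ) ^ (j + 1))) /
    ((1 - t * X ^ 2 * (q : ℂ) ^ j) * (1 - t * X⁻¹ ^ 2 * (q : ℂ) ^ (j + 1)))

/-!
Write `Z = X²`, so that `μ` becomes the weight `w_t(Z) = (Z; q)(q / Z; q) / ((t Z; q)(q t / Z; q))`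
with infinite `q`-Pochhammer symbols. On the unit circle, for an explicit function `g` holomorphic
on the annulus `|q| ≤ |Z| ≤ 1`,
`(1 - q t) w_{q t}(Z) - (1 + q t)(1 - q t²) w_t(Z) = g(Z) - g(q Z)`.
By Cauchy's theorem the right side has constant term zero. The product side satisfies the same
`q`-difference equation in `t`, so the quotient of the two sides is invariant under `t ↦ q t`;
being continuous at `t = 0`, it is constant. At `t = q` the weight is the Laurent polynomial
`(1 - Z)(1 - q / Z)`, and both sides equal `1 + q`.
-/

lemma apply_eq_apply_zero_of_apply_smul_eq {𝕜 E Y : Type*} [NormedField 𝕜]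
    [SeminormedAddCommGroup E] [NormedSpace 𝕜 E] [TopologicalSpace Y] [T2Space Y]
    {f : E → Y} {c : 𝕜} {r : ℝ} (hc : ‖c‖ < 1) (hf : ContinuousAt f 0)
    (h : ∀ x, ‖x‖ < r → f (c • x) = f x) {x : E} (hx : ‖x‖ < r) : f x = f 0 := by
  have hnorm (n : ℕ) : ‖c ^ n • x‖ < r := by
    rw [norm_smul, norm_pow]
    exact (mul_le_of_le_one_left (norm_nonneg x) (pow_le_one₀ (norm_nonneg c) hc.le)).trans_lt hx
  have hiter (n : ℕ) : f (c ^ n • x) = f x := by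
    induction n with
    | zero => rw [pow_zero, one_smul]
    | succ n ih => rw [pow_succ', mul_smul, h _ (hnorm n), ih]
  have hlim : Tendsto (fun n : ℕ => c ^ n • x) atTop (nhds 0) := by
    simpa only [zero_smul] using (tendsto_pow_atTop_nhds_zero_of_norm_lt_one hc).smul_const x
  exact tendsto_nhds_unique tendsto_const_nhds ((hf.tendsto.comp hlim).congr hiter)

lemma norm_mul_lt_one {R : Type*} [SeminormedRing R] {a b : R} (ha : ‖a‖ < 1) (hb : ‖b‖ ≤ 1) :
    ‖a * b‖ < 1 :=
  (norm_mul_le a b).trans_lt (mul_lt_one_of_nonneg_of_lt_one_left (norm_nonneg a) ha hb)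

lemma ne_one_of_norm_lt_one {R : Type*} [SeminormedRing R] [NormOneClass R] {a : R}
    (ha : ‖a‖ < 1) : a ≠ 1 := by
  rintro rfl
  exact ha.ne norm_one

lemma one_sub_ne_zero_of_norm_lt_one {R : Type*} [SeminormedRing R] [NormOneClass R] {a : R}
    (ha : ‖a‖ < 1) : 1 - a ≠ 0 :=
  sub_ne_zero.mpr (ne_one_of_norm_lt_one ha).symm

section CircleAverage

open Metric Real

variable {E : Type*} [NormedAddCommGroup E]

lemma continuousOn_circleAverage_of_continuousOn_prod {T : Type*} [TopologicalSpace T]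
    [NormedSpace ℝ E] {F : T → ℂ → E} {s : Set T} {c : ℂ} {R : ℝ}
    (hF : ContinuousOn (Function.uncurry F) (s ×ˢ sphere c |R|)) :
    ContinuousOn (fun x => circleAverage (F x) c R) s := by
  rw [continuousOn_iff_continuous_domRestrict]
  refine (intervalIntegral.continuous_parametric_intervalIntegral_of_continuous'
    (f := fun (x : s) θ => F x (circleMap c R θ)) ?_ 0 (2 * π)).const_smul _
  exact hF.comp_continuous (f := fun p : s × ℝ => ((p.1 : T), circleMap c R p.2)) (by fun_prop)
    fun p => ⟨p.1.2, circleMap_mem_sphere' c R p.2⟩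

lemma circleAverage_comp_const_mul [NormedSpace ℝ E] (f : ℂ → E) (c : ℂ) (R : ℝ) :
    circleAverage (fun z => f (c * z)) 0 R = circleAverage f 0 (‖c‖ * R) := by
  have hc : c = circleMap 0 ‖c‖ c.arg := by
    rw [circleMap_zero, Complex.norm_mul_exp_arg_mul_I]
  have hmul (θ : ℝ) : c * circleMap 0 R θ = circleMap 0 (‖c‖ * R) (θ + c.arg) := by
    conv_lhs => rw [hc]
    rw [circleMap_zero_mul, add_comm]
  rw [circleAverage_eq_integral_add (R := ‖c‖ * R) c.arg, circleAverage]
  simp only [hmul]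

lemma circleAverage_comp_pow [NormedSpace ℝ E] {f : ℂ → E} {n : ℕ} (hn : n ≠ 0) {R : ℝ}
    (hf : CircleIntegrable f 0 (R ^ n)) :
    circleAverage (fun z => f (z ^ n)) 0 R = circleAverage f 0 (R ^ n) := by
  set F : ℝ → E := fun θ => f (circleMap 0 (R ^ n) θ)
  have hper : Function.Periodic F (2 * π) := fun θ => by
    simp only [F, periodic_circleMap 0 (R ^ n) θ]
  have hint : ∀ a b, IntervalIntegrable F MeasureTheory.volume a b :=
    hper.intervalIntegrable₀ two_pi_pos.ne' hf
  have hwind := hper.intervalIntegral_add_zsmul_eq n 0 hint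
  simp only [zero_add, natCast_zsmul, nsmul_eq_mul] at hwind
  have hn' : (n : ℝ) ≠ 0 := Nat.cast_ne_zero.mpr hn
  simp only [circleAverage, circleMap_zero_pow]
  rw [intervalIntegral.integral_comp_mul_left F hn', mul_zero, hwind, ← Nat.cast_smul_eq_nsmul ℝ,
    inv_smul_smul₀ hn']

lemma circleAverage_zpow_of_ne_zero {n : ℤ} (hn : n ≠ 0) (R : ℝ) :
    circleAverage (fun z => z ^ n) 0 R = 0 := by
  rcases eq_or_ne R 0 with rfl | hR
  · rw [circleAverage_zero, zero_zpow n hn]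
  have hzpow (θ : ℝ) : (circleMap 0 R θ - 0)⁻¹ • circleMap 0 R θ ^ n =
      (circleMap 0 R θ - 0) ^ (n - 1) := by
    rw [sub_zero, zpow_sub_one₀ (circleMap_ne_center hR), smul_eq_mul, mul_comm]
  have hintegral : ∮ z in C(0, R), (z - 0)⁻¹ • z ^ n = ∮ z in C(0, R), (z - 0) ^ (n - 1) := by
    simp only [circleIntegral, hzpow]
  rw [circleAverage_eq_circleIntegral hR, hintegral,
    circleIntegral.integral_sub_zpow_of_ne (by lia), smul_zero]

lemma circleAverage_eq_of_differentiableOn_annulus [NormedSpace ℂ E] [CompleteSpace E]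
    {f : ℂ → E} {c : ℂ} {r R : ℝ} (hr : 0 < r) (hrR : r ≤ R)
    (hf : DifferentiableOn ℂ f (closedBall c R \ ball c r)) :
    circleAverage f c r = circleAverage f c R := by
  have hopen : IsOpen (ball c R \ closedBall c r) := isOpen_ball.sdiff isClosed_closedBall
  rw [circleAverage_eq_circleIntegral hr.ne', circleAverage_eq_circleIntegral (hr.trans_le hrR).ne',
    Complex.circleIntegral_sub_center_inv_smul_eq_of_differentiable_on_annulus_off_countable hr hrR
      Set.countable_empty hf.continuousOn fun z hz => ?_]
  exact (hf.mono (Set.sdiff_subset_sdiff ball_subset_closedBall ball_subset_closedBall)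
    ).differentiableAt (hopen.mem_nhds hz.1)

lemma circleAverage_sub_comp_const_mul_eq_zero [NormedSpace ℂ E] [CompleteSpace E]
    {f : ℂ → E} {c : ℂ} (hc0 : c ≠ 0) (hc1 : ‖c‖ ≤ 1)
    (hf : DifferentiableOn ℂ f (closedBall 0 1 \ ball 0 ‖c‖)) :
    circleAverage (fun z => f z - f (c * z)) 0 1 = 0 := by
  have hsphere : Set.MapsTo id (sphere (0 : ℂ) 1) (closedBall 0 1 \ ball 0 ‖c‖) := fun z hz => by
    simpa [mem_sphere_zero_iff_norm.mp hz] using hc1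
  have hscaled : Set.MapsTo (c * ·) (sphere (0 : ℂ) 1) (closedBall 0 1 \ ball 0 ‖c‖) :=
    fun z hz => by simpa [mem_sphere_zero_iff_norm.mp hz] using hc1
  have hint : CircleIntegrable f 0 1 :=
    (hf.continuousOn.comp continuousOn_id hsphere).circleIntegrable zero_le_one
  have hint_scaled : CircleIntegrable (fun z => f (c * z)) 0 1 :=
    (hf.continuousOn.comp (continuousOn_const.mul continuousOn_id) hscaled).circleIntegrable
      zero_le_one
  rw [circleAverage_fun_sub hint hint_scaled, circleAverage_comp_const_mul, mul_one,
    circleAverage_eq_of_differentiableOn_annulus (norm_pos_iff.mpr hc0) hc1 hf, sub_self]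

lemma circleAverage_zero_one_eq_integral_exp (f : ℂ → ℂ) :
    circleAverage f 0 1 =
      (1 / (2 * (π : ℂ))) * ∫ φ in (0 : ℝ)..(2 * π), f (Complex.exp (Complex.I * φ)) := by
  simp only [circleAverage, circleMap_zero, Complex.ofReal_one, one_mul, mul_comm Complex.I,
    Complex.real_smul, one_div]
  push_cast
  rfl

end CircleAverage

section QPochhammer

/-- The infinite `q`-Pochhammer symbol `(z; q)_∞`. -/
def qPochhammer {𝕜 : Type*} [NormedField 𝕜] (q z : 𝕜) : 𝕜 := ∏' j : ℕ, (1 - z * q ^ j)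

variable {𝕜 : Type*} [NormedField 𝕜] {q z : 𝕜}

lemma summable_norm_neg_mul_pow (hq : ‖q‖ < 1) (z : 𝕜) :
    Summable fun j : ℕ => ‖-(z * q ^ j)‖ := by
  simpa only [norm_neg, norm_mul, norm_pow] using
    (summable_geometric_of_lt_one (norm_nonneg q) hq).mul_left ‖z‖

variable [CompleteSpace 𝕜]

lemma multipliable_one_sub_mul_pow (hq : ‖q‖ < 1) (z : 𝕜) :
    Multipliable fun j : ℕ => 1 - z * q ^ j := by
  simpa only [sub_eq_add_neg] using
    multipliable_one_add_of_summable (summable_norm_neg_mul_pow hq z)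

lemma qPochhammer_eq_one_sub_mul (hq : ‖q‖ < 1) (z : 𝕜) :
    qPochhammer q z = (1 - z) * qPochhammer q (q * z) := by
  have hshift (j : ℕ) : 1 - z * q ^ (j + 1) = 1 - q * z * q ^ j := by ring
  have hmul : Multipliable fun j : ℕ => 1 - z * q ^ (j + 1) := by
    simpa only [hshift] using multipliable_one_sub_mul_pow hq (q * z)
  rw [qPochhammer, tprod_eq_zero_mul' (f := fun j : ℕ => 1 - z * q ^ j) hmul, pow_zero, mul_one]
  simp only [hshift, qPochhammer]

lemma qPochhammer_ne_zero (hq : ‖q‖ < 1) (hz : ‖z‖ < 1) : qPochhammer q z ≠ 0 := by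
  have hfactor (j : ℕ) : 1 + -(z * q ^ j) ≠ 0 := by
    rw [← sub_eq_add_neg]
    refine one_sub_ne_zero_of_norm_lt_one ?_
    exact norm_mul_lt_one hz (by rw [norm_pow]; exact pow_le_one₀ (norm_nonneg q) hq.le)
  simpa only [qPochhammer, sub_eq_add_neg] using
    tprod_one_add_ne_zero_of_summable hfactor (summable_norm_neg_mul_pow hq z)

lemma tprod_one_sub_mul_pow_div (hq : ‖q‖ < 1) {c d : 𝕜} (hc : qPochhammer q c ≠ 0)
    (hd : qPochhammer q d ≠ 0) (a b : 𝕜) :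
    ∏' j : ℕ, ((1 - a * q ^ j) * (1 - b * q ^ j)) / ((1 - c * q ^ j) * (1 - d * q ^ j)) =
      qPochhammer q a * qPochhammer q b / (qPochhammer q c * qPochhammer q d) := by
  have hmul := multipliable_one_sub_mul_pow hq
  have htprod (x y : 𝕜) : ∏' j : ℕ, ((1 - x * q ^ j) * (1 - y * q ^ j)) =
      qPochhammer q x * qPochhammer q y := (hmul x).tprod_mul (hmul y)
  rw [Multipliable.tprod_div₀ ((hmul a).mul (hmul b)) ((hmul c).mul (hmul d)), htprod, htprod]
  rw [htprod]
  exact mul_ne_zero hc hd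

lemma differentiable_qPochhammer {q : ℂ} (hq : ‖q‖ < 1) : Differentiable ℂ (qPochhammer q) := by
  intro z
  have hprod : HasProdLocallyUniformlyOn (fun (j : ℕ) (x : ℂ) => 1 + -(x * q ^ j))
      (fun x => ∏' j : ℕ, (1 + -(x * q ^ j))) (Metric.ball 0 (‖z‖ + 1)) := by
    refine ((summable_geometric_of_lt_one (norm_nonneg q) hq).mul_left
      (‖z‖ + 1)).hasProdLocallyUniformlyOn_nat_one_add Metric.isOpen_ball
      (.of_forall fun j x hx => ?_) (fun j => by fun_prop)
    rw [mem_ball_zero_iff] at hx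
    rw [norm_neg, norm_mul, norm_pow]
    gcongr
  have hdiff := hprod.differentiableOn
    (.of_forall fun _ => by
      simpa only [Finset.prod_fn] using DifferentiableOn.finsetProd fun _ _ => by fun_prop)
    Metric.isOpen_ball
  simp only [← sub_eq_add_neg] at hdiff
  exact hdiff.differentiableAt (Metric.isOpen_ball.mem_nhds (by simp))

end QPochhammer

section Weight

/-- The Macdonald weight of type A₁ as a function of `z = X ^ 2`: the theta-like product
`(z; q)_∞ (q / z; q)_∞ / ((t z; q)_∞ (q t / z; q)_∞)`. -/
def macdonaldWeight {𝕜 : Type*} [NormedField 𝕜] (q t z : 𝕜) : 𝕜 :=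
  qPochhammer q z * qPochhammer q (q * z⁻¹) /
    (qPochhammer q (t * z) * qPochhammer q (q * (t * z⁻¹)))

/-- The certificate for the `q`-difference equation in `t` of the constant term: the recurrence
applied to the weight is `macdonaldCertificate q t z - macdonaldCertificate q t (q * z)`. -/
def macdonaldCertificate {𝕜 : Type*} [NormedField 𝕜] (q t z : 𝕜) : 𝕜 :=
  -t * ((z - q * t) * (1 + q * z⁻¹)) * macdonaldWeight q t z

section Algebra

variable {𝕜 : Type*} [NormedField 𝕜] [CompleteSpace 𝕜] {q t z : 𝕜}

lemma macdonaldWeight_apply_mul (hq0 : q ≠ 0) (hq1 : ‖q‖ < 1) (hz : z ≠ 0) (htz : t * z ≠ 1)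
    (hzt : z ≠ t) :
    macdonaldWeight q t (q * z) * (z - t) = macdonaldWeight q t z * (t * z - 1) := by
  have hinv : q * (q * z)⁻¹ = z⁻¹ := by field_simp
  have hinv_mul : q * (t * (q * z)⁻¹) = t * z⁻¹ := by field_simp
  have hden : 1 - t * z ≠ 0 := sub_ne_zero.mpr htz.symm
  have hden_inv : 1 - t * z⁻¹ = (z - t) / z := by field_simp
  have hzt' : z - t ≠ 0 := sub_ne_zero.mpr hzt
  rw [macdonaldWeight, macdonaldWeight, hinv, hinv_mul, mul_left_comm t q z,
    qPochhammer_eq_one_sub_mul hq1 z, qPochhammer_eq_one_sub_mul hq1 z⁻¹,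
    qPochhammer_eq_one_sub_mul hq1 (t * z), qPochhammer_eq_one_sub_mul hq1 (t * z⁻¹), hden_inv,
    ← neg_sub 1 (t * z)]
  generalize 1 - t * z = F at *
  generalize qPochhammer q (q * z) = A
  generalize qPochhammer q (q * z⁻¹) = B
  generalize qPochhammer q (q * (t * z)) = C
  generalize qPochhammer q (q * (t * z⁻¹)) = D
  field_simp
  ring

lemma macdonaldWeight_mul_parameter (hq : ‖q‖ < 1) (htz : t * z ≠ 1) (hzt : q * (t * z⁻¹) ≠ 1) :
    macdonaldWeight q (q * t) z =
      macdonaldWeight q t z * ((1 - t * z) * (1 - q * (t * z⁻¹))) := by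
  have hden : 1 - t * z ≠ 0 := sub_ne_zero.mpr htz.symm
  have hden_inv : 1 - q * (t * z⁻¹) ≠ 0 := sub_ne_zero.mpr hzt.symm
  rw [macdonaldWeight, macdonaldWeight, mul_assoc q t z, mul_assoc q t z⁻¹,
    qPochhammer_eq_one_sub_mul hq (t * z), qPochhammer_eq_one_sub_mul hq (q * (t * z⁻¹)),
    mul_mul_mul_comm (1 - t * z), mul_comm ((1 - t * z) * _),
    div_mul_eq_mul_div, mul_div_mul_right _ _ (mul_ne_zero hden hden_inv)]

lemma macdonaldWeight_self (hq : ‖q‖ < 1) (hz : ‖q * z‖ < 1) (hz' : ‖q * (q * z⁻¹)‖ < 1) :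
    macdonaldWeight q q z = (1 - z) * (1 - q * z⁻¹) := by
  have h := mul_ne_zero (qPochhammer_ne_zero hq hz) (qPochhammer_ne_zero hq hz')
  rw [macdonaldWeight, qPochhammer_eq_one_sub_mul hq z, qPochhammer_eq_one_sub_mul hq (q * z⁻¹),
    mul_mul_mul_comm, mul_div_cancel_right₀ _ h]

lemma macdonaldCertificate_sub (hq0 : q ≠ 0) (hq1 : ‖q‖ < 1) (hz : z ≠ 0) (htz : t * z ≠ 1)
    (hzt : z ≠ t) (hzqt : q * (t * z⁻¹) ≠ 1) :
    macdonaldCertificate q t z - macdonaldCertificate q t (q * z) =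
      (1 - q * t) * macdonaldWeight q (q * t) z -
        (1 + q * t) * (1 - q * t ^ 2) * macdonaldWeight q t z := by
  have hcert : macdonaldCertificate q t (q * z) =
      -t * (q * (1 + z⁻¹)) * (macdonaldWeight q t z * (t * z - 1)) := by
    rw [← macdonaldWeight_apply_mul hq0 hq1 hz htz hzt, macdonaldCertificate]
    field_simp
  rw [hcert, macdonaldCertificate, macdonaldWeight_mul_parameter hq1 htz hzqt]
  field_simp
  ring

end Algebra

open Metric

variable {q t : ℂ}

lemma differentiableOn_inv_annulus {r : ℝ} (hr : 0 < r) (R : ℝ) :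
    DifferentiableOn ℂ (fun z : ℂ => z⁻¹) (closedBall 0 R \ ball 0 r) := by
  refine differentiableOn_inv.mono ?_
  rintro z hz rfl
  exact hz.2 (mem_ball_self hr)

lemma differentiableOn_macdonaldWeight (hq0 : q ≠ 0) (hq1 : ‖q‖ < 1) (ht : ‖t‖ < 1) :
    DifferentiableOn ℂ (macdonaldWeight q t) (closedBall 0 1 \ ball 0 ‖q‖) := by
  have hinv := differentiableOn_inv_annulus (norm_pos_iff.mpr hq0) 1
  have hcomp {f : ℂ → ℂ} (hf : DifferentiableOn ℂ f (closedBall 0 1 \ ball 0 ‖q‖)) :=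
    (differentiable_qPochhammer hq1).comp_differentiableOn hf
  refine ((hcomp differentiableOn_id).mul (hcomp (hinv.const_mul q))).div
    ((hcomp (differentiableOn_id.const_mul t)).mul (hcomp ((hinv.const_mul t).const_mul q)))
    fun z hz => mul_ne_zero (qPochhammer_ne_zero hq1 ?_) (qPochhammer_ne_zero hq1 ?_)
  · exact norm_mul_lt_one ht (mem_closedBall_zero_iff.mp hz.1)
  · have hqz : ‖q * z⁻¹‖ ≤ 1 := by
      rw [norm_mul, norm_inv, ← div_eq_mul_inv]
      exact div_le_one_of_le₀ (by simpa using hz.2) (norm_nonneg z)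
    rw [mul_left_comm]
    exact norm_mul_lt_one ht hqz

lemma continuousOn_uncurry_macdonaldWeight (hq : ‖q‖ < 1) :
    ContinuousOn (Function.uncurry (macdonaldWeight q)) (ball 0 1 ×ˢ sphere 0 1) := by
  have hP := (differentiable_qPochhammer hq).continuous
  have hinv : ContinuousOn (fun p : ℂ × ℂ => p.2⁻¹) (ball 0 1 ×ˢ sphere 0 1) :=
    continuousOn_snd.inv₀ fun p hp => ne_of_mem_sphere hp.2 one_ne_zero
  refine ContinuousOn.div (by fun_prop) (by fun_prop) fun p hp => ?_
  have ht : ‖p.1‖ < 1 := mem_ball_zero_iff.mp hp.1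
  have hz : ‖p.2‖ = 1 := mem_sphere_zero_iff_norm.mp hp.2
  have htz : ‖p.1 * p.2‖ < 1 := norm_mul_lt_one ht hz.le
  have htz_inv : ‖p.1 * p.2⁻¹‖ < 1 := norm_mul_lt_one ht (by rw [norm_inv, hz, inv_one])
  exact mul_ne_zero (qPochhammer_ne_zero hq htz)
    (qPochhammer_ne_zero hq (norm_mul_lt_one hq htz_inv.le))

lemma continuousOn_macdonaldWeight (hq : ‖q‖ < 1) (ht : ‖t‖ < 1) :
    ContinuousOn (macdonaldWeight q t) (sphere 0 1) :=
  (continuousOn_uncurry_macdonaldWeight hq).comp (f := fun z => (t, z)) (by fun_prop)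
    fun _ hz => ⟨mem_ball_zero_iff.mpr ht, hz⟩

lemma differentiableOn_macdonaldCertificate (hq0 : q ≠ 0) (hq1 : ‖q‖ < 1) (ht : ‖t‖ < 1) :
    DifferentiableOn ℂ (macdonaldCertificate q t) (closedBall 0 1 \ ball 0 ‖q‖) := by
  have hw := differentiableOn_macdonaldWeight hq0 hq1 ht
  have hinv := differentiableOn_inv_annulus (norm_pos_iff.mpr hq0) 1
  unfold macdonaldCertificate
  fun_prop

end Weight

section ConstantTerm

open Metric Real

/-- The constant term of the Macdonald weight: its average over the unit circle. -/
def macdonaldConstantTerm (q t : ℂ) : ℂ := circleAverage (macdonaldWeight q t) 0 1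

variable {q t : ℂ}

lemma macdonaldConstantTerm_mul_parameter (hq0 : q ≠ 0) (hq1 : ‖q‖ < 1) (ht : ‖t‖ < 1) :
    (1 - q * t) * macdonaldConstantTerm q (q * t) =
      (1 + q * t) * (1 - q * t ^ 2) * macdonaldConstantTerm q t := by
  have hqt : ‖q * t‖ < 1 := norm_mul_lt_one hq1 ht.le
  have htelescope : Set.EqOn
      (fun z => (1 - q * t) * macdonaldWeight q (q * t) z -
        (1 + q * t) * (1 - q * t ^ 2) * macdonaldWeight q t z)
      (fun z => macdonaldCertificate q t z - macdonaldCertificate q t (q * z))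
      (sphere 0 |1|) := fun z hz => by
    rw [abs_one] at hz
    have hnorm : ‖z‖ = 1 := mem_sphere_zero_iff_norm.mp hz
    have htz : ‖t * z‖ < 1 := norm_mul_lt_one ht hnorm.le
    have htz_inv : ‖t * z⁻¹‖ < 1 := norm_mul_lt_one ht (by rw [norm_inv, hnorm, inv_one])
    refine (macdonaldCertificate_sub hq0 hq1 (ne_of_mem_sphere hz one_ne_zero)
      (ne_one_of_norm_lt_one htz) ?_
      (ne_one_of_norm_lt_one (norm_mul_lt_one hq1 htz_inv.le))).symm
    rintro rfl
    exact ht.ne hnorm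
  have hint {s : ℂ} (hs : ‖s‖ < 1) (a : ℂ) :
      CircleIntegrable (fun z => a • macdonaldWeight q s z) 0 1 :=
    ((continuousOn_macdonaldWeight hq1 hs).const_smul a).circleIntegrable zero_le_one
  have hlinear {s₁ s₂ : ℂ} (hs₁ : ‖s₁‖ < 1) (hs₂ : ‖s₂‖ < 1) (a b : ℂ) :
      a * macdonaldConstantTerm q s₁ - b * macdonaldConstantTerm q s₂ =
        circleAverage (fun z => a * macdonaldWeight q s₁ z - b * macdonaldWeight q s₂ z) 0 1 := by
    simp only [← smul_eq_mul]
    rw [circleAverage_fun_sub (hint hs₁ a) (hint hs₂ b), circleAverage_fun_smul,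
      circleAverage_fun_smul, macdonaldConstantTerm, macdonaldConstantTerm]
  rw [← sub_eq_zero, hlinear hqt ht, circleAverage_congr_sphere htelescope]
  exact circleAverage_sub_comp_const_mul_eq_zero hq0 hq1.le
    (differentiableOn_macdonaldCertificate hq0 hq1 ht)

lemma macdonaldConstantTerm_self (hq : ‖q‖ < 1) : macdonaldConstantTerm q q = 1 + q := by
  have hweight : Set.EqOn (macdonaldWeight q q)
      (fun z => (1 + q) - (z ^ (1 : ℤ) + q • z ^ (-1 : ℤ))) (sphere 0 |1|) := fun z hz => by
    rw [abs_one] at hz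
    have hnorm : ‖z‖ = 1 := mem_sphere_zero_iff_norm.mp hz
    have hqz_inv : ‖q * z⁻¹‖ < 1 := norm_mul_lt_one hq (by rw [norm_inv, hnorm, inv_one])
    have hz0 : z ≠ 0 := ne_of_mem_sphere hz one_ne_zero
    simp only [macdonaldWeight_self hq (norm_mul_lt_one hq hnorm.le)
      (norm_mul_lt_one hq hqz_inv.le), zpow_one, zpow_neg_one, smul_eq_mul]
    field_simp
    ring
  have hint (n : ℤ) : CircleIntegrable (fun z => z ^ n) 0 1 :=
    (continuousOn_id.zpow₀ n fun z hz =>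
      .inl (ne_of_mem_sphere hz one_ne_zero)).circleIntegrable zero_le_one
  have hint_inv : CircleIntegrable (fun z => q • z ^ (-1 : ℤ)) 0 1 := (hint (-1)).const_fun_smul
  rw [macdonaldConstantTerm, circleAverage_congr_sphere hweight,
    circleAverage_fun_sub (circleIntegrable_const _ _ _) ((hint 1).fun_add hint_inv),
    circleAverage_fun_add (hint 1) hint_inv, circleAverage_fun_smul, circleAverage_const,
    circleAverage_zpow_of_ne_zero one_ne_zero, circleAverage_zpow_of_ne_zero (by norm_num),
    smul_zero, add_zero, sub_zero]

lemma continuousOn_macdonaldConstantTerm (hq : ‖q‖ < 1) :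
    ContinuousOn (macdonaldConstantTerm q) (ball 0 1) :=
  continuousOn_circleAverage_of_continuousOn_prod
    (by simpa only [abs_one] using continuousOn_uncurry_macdonaldWeight hq)

end ConstantTerm

section Product

/-- The product side of the constant term formula,
`(q t; q)_∞ ^ 2 / ((q t ^ 2; q)_∞ (q; q)_∞)`. -/
def macdonaldProduct {𝕜 : Type*} [NormedField 𝕜] (q t : 𝕜) : 𝕜 :=
  qPochhammer q (q * t) * qPochhammer q (q * t) / (qPochhammer q (q * t ^ 2) * qPochhammer q q)

variable {𝕜 : Type*} [NormedField 𝕜] [CompleteSpace 𝕜] {q t : 𝕜}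

lemma qPochhammer_mul_sq_ne_zero (hq : ‖q‖ < 1) (ht : ‖t‖ < 1) :
    qPochhammer q (q * t ^ 2) ≠ 0 :=
  qPochhammer_ne_zero hq (norm_mul_lt_one hq (by
    rw [norm_pow]; exact pow_le_one₀ (norm_nonneg t) ht.le))

lemma macdonaldProduct_ne_zero (hq : ‖q‖ < 1) (ht : ‖t‖ < 1) : macdonaldProduct q t ≠ 0 := by
  have hnum : qPochhammer q (q * t) ≠ 0 := qPochhammer_ne_zero hq (norm_mul_lt_one hq ht.le)
  exact div_ne_zero (mul_ne_zero hnum hnum)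
    (mul_ne_zero (qPochhammer_mul_sq_ne_zero hq ht) (qPochhammer_ne_zero hq hq))

lemma macdonaldProduct_mul_parameter (hq : ‖q‖ < 1) (ht : ‖t‖ < 1) :
    (1 - q * t) * macdonaldProduct q (q * t) =
      (1 + q * t) * (1 - q * t ^ 2) * macdonaldProduct q t := by
  have hqt : ‖q * t‖ < 1 := norm_mul_lt_one hq ht.le
  have hsub : 1 - q * t ≠ 0 := one_sub_ne_zero_of_norm_lt_one hqt
  have hadd : 1 + q * t ≠ 0 := by
    simpa using one_sub_ne_zero_of_norm_lt_one (a := -(q * t)) (by rwa [norm_neg])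
  have hsq : 1 - q * t ^ 2 ≠ 0 := by
    rw [sq, ← mul_assoc]
    exact one_sub_ne_zero_of_norm_lt_one (norm_mul_lt_one hqt ht.le)
  have hfactor : 1 - q * (q * t ^ 2) = (1 - q * t) * (1 + q * t) := by ring
  have harg : q * (q * t) ^ 2 = q * (q * (q * t ^ 2)) := by ring
  rw [macdonaldProduct, macdonaldProduct, harg, qPochhammer_eq_one_sub_mul hq (q * t),
    qPochhammer_eq_one_sub_mul hq (q * t ^ 2), qPochhammer_eq_one_sub_mul hq (q * (q * t ^ 2)),
    hfactor]
  field_simp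

lemma macdonaldProduct_self (hq : ‖q‖ < 1) : macdonaldProduct q q = 1 + q := by
  have hsub : 1 - q ≠ 0 := one_sub_ne_zero_of_norm_lt_one hq
  have hqq : ‖q * q‖ < 1 := norm_mul_lt_one hq hq.le
  have hsq : qPochhammer q (q * q) ≠ 0 := qPochhammer_ne_zero hq hqq
  have hcube : qPochhammer q (q * (q * q)) ≠ 0 :=
    qPochhammer_ne_zero hq (norm_mul_lt_one hq hqq.le)
  calc macdonaldProduct q q
      = (1 - q * q) * qPochhammer q (q * (q * q)) * qPochhammer q (q * q) /
          (qPochhammer q (q * (q * q)) * ((1 - q) * qPochhammer q (q * q))) := by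
        rw [macdonaldProduct, sq, ← qPochhammer_eq_one_sub_mul hq (q * q),
          ← qPochhammer_eq_one_sub_mul hq q]
    _ = 1 + q := by
        generalize qPochhammer q (q * (q * q)) = A at *
        generalize qPochhammer q (q * q) = B at *
        field_simp
        ring

lemma tprod_eq_macdonaldProduct (hq : ‖q‖ < 1) (ht : ‖t‖ < 1) :
    ∏' j : ℕ, (1 - t * q ^ (j + 1)) ^ 2 / ((1 - t ^ 2 * q ^ (j + 1)) * (1 - q ^ (j + 1))) =
      macdonaldProduct q t := by
  rw [macdonaldProduct, ← tprod_one_sub_mul_pow_div hq (qPochhammer_mul_sq_ne_zero hq ht)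
    (qPochhammer_ne_zero hq hq)]
  refine tprod_congr fun j => ?_
  ring_nf

end Product

section ConstantTermFormula

open Metric Real

variable {q t : ℂ}

lemma continuousOn_macdonaldProduct (hq : ‖q‖ < 1) :
    ContinuousOn (macdonaldProduct q) (ball 0 1) := by
  have hP := (differentiable_qPochhammer hq).continuous
  refine ContinuousOn.div (by fun_prop) (by fun_prop) fun t ht => ?_
  exact mul_ne_zero (qPochhammer_mul_sq_ne_zero hq (mem_ball_zero_iff.mp ht))
    (qPochhammer_ne_zero hq hq)

lemma macdonaldConstantTerm_eq_macdonaldProduct (hq0 : q ≠ 0) (hq1 : ‖q‖ < 1) (ht : ‖t‖ < 1) :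
    macdonaldConstantTerm q t = macdonaldProduct q t := by
  set ratio : ℂ → ℂ := fun s => macdonaldConstantTerm q s / macdonaldProduct q s
  have hinvariant (s : ℂ) (hs : ‖s‖ < 1) : ratio (q • s) = ratio s := by
    have hqs : ‖q * s‖ < 1 := norm_mul_lt_one hq1 hs.le
    rw [smul_eq_mul, div_eq_div_iff (macdonaldProduct_ne_zero hq1 hqs)
      (macdonaldProduct_ne_zero hq1 hs)]
    apply mul_left_cancel₀ (one_sub_ne_zero_of_norm_lt_one hqs)
    linear_combination macdonaldProduct q s * macdonaldConstantTerm_mul_parameter hq0 hq1 hs -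
      macdonaldConstantTerm q s * macdonaldProduct_mul_parameter hq1 hs
  have hcont : ContinuousAt ratio 0 :=
    ((continuousOn_macdonaldConstantTerm hq1).div (continuousOn_macdonaldProduct hq1)
      fun s hs => macdonaldProduct_ne_zero hq1 (mem_ball_zero_iff.mp hs)).continuousAt
        (ball_mem_nhds 0 one_pos)
  have hself : ratio q = 1 := by
    have hne := macdonaldProduct_ne_zero hq1 hq1
    simp only [ratio, macdonaldConstantTerm_self hq1]
    rw [macdonaldProduct_self hq1] at hne ⊢
    exact div_self hne
  refine (div_eq_one_iff_eq (macdonaldProduct_ne_zero hq1 ht)).mp ?_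
  calc ratio t = ratio 0 := apply_eq_apply_zero_of_apply_smul_eq hq1 hcont hinvariant ht
    _ = ratio q := (apply_eq_apply_zero_of_apply_smul_eq hq1 hcont hinvariant hq1).symm
    _ = 1 := hself

lemma tprod_eq_macdonaldWeight_sq (hq : ‖q‖ < 1) (ht : ‖t‖ < 1) {X : ℂ} (hX : ‖X‖ = 1) :
    ∏' j : ℕ, ((1 - X ^ 2 * q ^ j) * (1 - X⁻¹ ^ 2 * q ^ (j + 1))) /
      ((1 - t * X ^ 2 * q ^ j) * (1 - t * X⁻¹ ^ 2 * q ^ (j + 1))) =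
      macdonaldWeight q t (X ^ 2) := by
  have htX : ‖t * X ^ 2‖ < 1 := norm_mul_lt_one ht (by rw [norm_pow, hX, one_pow])
  have htX_inv : ‖t * (X ^ 2)⁻¹‖ < 1 :=
    norm_mul_lt_one ht (by rw [norm_inv, norm_pow, hX, one_pow, inv_one])
  rw [macdonaldWeight, ← tprod_one_sub_mul_pow_div hq (qPochhammer_ne_zero hq htX)
    (qPochhammer_ne_zero hq (norm_mul_lt_one hq htX_inv.le))]
  refine tprod_congr fun j => ?_
  rw [inv_pow]
  ring_nf

theorem macdonald_constant_term_A1_general (hq0 : q ≠ 0) (hq1 : ‖q‖ < 1) (ht : ‖t‖ < 1) :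
    circleAverage (fun X => ∏' j : ℕ, ((1 - X ^ 2 * q ^ j) * (1 - X⁻¹ ^ 2 * q ^ (j + 1))) /
      ((1 - t * X ^ 2 * q ^ j) * (1 - t * X⁻¹ ^ 2 * q ^ (j + 1)))) 0 1 =
    ∏' j : ℕ, (1 - t * q ^ (j + 1)) ^ 2 /
      ((1 - t ^ 2 * q ^ (j + 1)) * (1 - q ^ (j + 1))) := by
  have hweight : Set.EqOn (fun X => ∏' j : ℕ, ((1 - X ^ 2 * q ^ j) * (1 - X⁻¹ ^ 2 * q ^ (j + 1))) /
      ((1 - t * X ^ 2 * q ^ j) * (1 - t * X⁻¹ ^ 2 * q ^ (j + 1))))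
      (fun X => macdonaldWeight q t (X ^ 2)) (sphere 0 |1|) := fun X hX =>
    tprod_eq_macdonaldWeight_sq hq1 ht (by simpa using hX)
  have hint : CircleIntegrable (macdonaldWeight q t) 0 (1 ^ 2) := by
    simpa only [one_pow] using (continuousOn_macdonaldWeight hq1 ht).circleIntegrable zero_le_one
  rw [tprod_eq_macdonaldProduct hq1 ht, ← macdonaldConstantTerm_eq_macdonaldProduct hq0 hq1 ht,
    circleAverage_congr_sphere hweight, circleAverage_comp_pow two_ne_zero hint, one_pow,
    macdonaldConstantTerm]

end ConstantTermFormula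

/-- the Macdonald constant term formula of type A₁. -/
theorem macdonald_constant_term_A1 (q : ℝ) (hq0 : 0 < q) (hq1 : q < 1)
    (t : ℂ) (ht : ‖t‖ < 1) :
    (1 / (2 * (Real.pi : ℂ))) *
      ∫ φ : ℝ in (0:ℝ)..(2 * Real.pi), muA1 q t (Complex.exp (Complex.I * (φ : ℂ))) =
    ∏' j : ℕ, (1 - t * (q : ℂ) ^ (j + 1)) ^ 2 /
      ((1 - t ^ 2 * (q : ℂ) ^ (j + 1)) * (1 - (q : ℂ) ^ (j + 1))) := by
  rw [← circleAverage_zero_one_eq_integral_exp]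
  exact macdonald_constant_term_A1_general (by exact_mod_cast hq0.ne')
    (by rwa [Complex.norm_of_nonneg hq0.le]) ht

end
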